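/- For every positive integer i there exists a positive integer μ_i such that for all positive integers n and k it holds that W_{i,k} < F_n/2 if and only if n − k > μ_i. -/

import Mathlib

open Real

noncomputable def phi : ℝ := (1 + Real.sqrt 5) / 2

noncomputable def W (i : ℕ) : ℕ → ℤ
  | 0 => ⌊phi ^ 2 * (⌊phi * i⌋ : ℝ)⌋ - ⌊phi * (⌊phi * i⌋ : ℝ)⌋
  | 1 => ⌊phi * (⌊phi * i⌋ : ℝ)⌋
  | 2 => ⌊phi ^ 2 * (⌊phi * i⌋ : ℝ)⌋
  | (k + 3) => W i (k + 2) + W i (k + 1)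

noncomputable def wplus (i : ℕ) : ℝ := phi⁻¹ ^ 2 * (W i 1 : ℝ) + phi⁻¹ * (W i 2 : ℝ)

noncomputable def wminus (i : ℕ) : ℝ := phi ^ 2 * (W i 1 : ℝ) - phi * (W i 2 : ℝ)

noncomputable def eta (i : ℕ) : ℝ := -(wplus i * wminus i)

lemma phi_eq_gold : phi = Real.goldenRatio := rfl

lemma phi_sq' : phi ^ 2 = phi + 1 := by
  rw [phi_eq_gold]; exact Real.goldenRatio_sq

lemma phi_lb : (1.618 : ℝ) < phi := by
  have h : (2.236 : ℝ) < Real.sqrt 5 := by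
    apply Real.lt_sqrt_of_sq_lt; norm_num
  unfold phi; linarith

lemma phi_ub : phi < (1.6181 : ℝ) := by
  have h : Real.sqrt 5 < (2.2362 : ℝ) := by
    rw [Real.sqrt_lt' (by norm_num)]; norm_num
  unfold phi; linarith

lemma m_facts (i : ℕ) (hi : 0 < i) :
    0 < phi * i - (⌊phi * i⌋ : ℝ) ∧ phi * i - (⌊phi * i⌋ : ℝ) < 1 := by
  constructor
  · have h1 : (⌊phi * i⌋ : ℝ) ≤ phi * i := Int.floor_le _
    have h2 : (⌊phi * i⌋ : ℝ) ≠ phi * i := by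
      have h : Irrational (phi * i) := by
        rw [phi_eq_gold]
        exact Real.goldenRatio_irrational.mul_natCast hi.ne'
      exact (h.ne_int _).symm
    have := lt_of_le_of_ne h1 h2
    linarith
  · have := Int.lt_floor_add_one (phi * i)
    linarith

lemma W_one (i : ℕ) (hi : 0 < i) : W i 1 = ⌊phi * i⌋ + i - 1 := by
  obtain ⟨h1, h2⟩ := m_facts i hi
  have l := phi_lb
  have u := phi_ub
  have s := phi_sq'
  show ⌊phi * (⌊phi * i⌋ : ℝ)⌋ = _
  generalize (⌊phi * i⌋ : ℤ) = m at *
  rw [Int.floor_eq_iff]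
  push_cast
  have e : phi * m = m + i - (phi - 1) * (phi * i - m) := by
    linear_combination (i : ℝ) * s
  constructor <;> rw [e] <;> nlinarith

lemma W_two (i : ℕ) (hi : 0 < i) : W i 2 = 2 * ⌊phi * i⌋ + i - 1 := by
  have h := W_one i hi
  have e : W i 2 = ⌊phi ^ 2 * (⌊phi * i⌋ : ℝ)⌋ := rfl
  have e1 : W i 1 = ⌊phi * (⌊phi * i⌋ : ℝ)⌋ := rfl
  rw [e1] at h
  rw [e, phi_sq', add_mul, one_mul, Int.floor_add_intCast, h]
  ring

lemma W_one_pos (i : ℕ) (hi : 0 < i) : 1 ≤ W i 1 ∧ 1 ≤ W i 2 := by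
  have hm : 1 ≤ ⌊phi * i⌋ := by
    rw [Int.le_floor]
    have l := phi_lb
    have : (1 : ℝ) ≤ i := by exact_mod_cast hi
    push_cast; nlinarith
  rw [W_one i hi, W_two i hi]
  omega

lemma psi_pow (n : ℕ) (c : ℕ) (h : c ≤ n) : |Real.goldenConj ^ n| ≤ |Real.goldenConj| ^ c := by
  rw [abs_pow]
  apply pow_le_pow_of_le_one (abs_nonneg _) _ h
  rw [abs_le]
  exact ⟨Real.neg_one_lt_goldenConj.le, by linarith [Real.goldenConj_neg]⟩

lemma psi_abs : |Real.goldenConj| = phi - 1 := by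
  rw [abs_of_neg Real.goldenConj_neg, phi_eq_gold]
  linarith [Real.goldenRatio_add_goldenConj]

lemma key (i : ℕ) (hi : 0 < i) (n : ℕ) (hn : 1 ≤ n) :
    2 * W i 1 < (Nat.fib n : ℤ) ↔ 2 * W i 2 < (Nat.fib (n + 1) : ℤ) := by
  obtain ⟨p1, p2⟩ := W_one_pos i hi
  obtain ⟨h1, h2⟩ := m_facts i hi
  have l := phi_lb
  have u := phi_ub
  have s := phi_sq'
  have hF : (Nat.fib (n + 1) : ℝ) - phi * Nat.fib n = Real.goldenConj ^ n := by
    rw [phi_eq_gold]; exact Real.fib_succ_sub_goldenRatio_mul_fib n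
  have hd : (W i 2 : ℝ) = phi * W i 1 + (phi - 1) - (2 - phi) * (phi * i - (⌊phi * i⌋ : ℝ)) := by
    rw [W_one i hi, W_two i hi]; push_cast
    linear_combination (-(i : ℝ)) * s
  set ε := phi * i - (⌊phi * i⌋ : ℝ)
  constructor
  · intro h
    have hn3 : 3 ≤ n := by
      by_contra hc
      have : Nat.fib n ≤ Nat.fib 2 := Nat.fib_mono (by omega)
      norm_num at this
      omega
    have hp := psi_pow n 3 hn3
    rw [psi_abs] at hp
    have hq : (phi - 1) ^ 3 ≤ 0.3 := by
      have : (phi - 1) ^ 3 ≤ (0.6181 : ℝ) ^ 3 := by gcongr <;> linarith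
      norm_num at this ⊢; linarith
    have hr := (abs_le.mp (hp.trans hq)).1
    have h' : 2 * (W i 1 : ℝ) ≤ Nat.fib n - 1 := by
      have : 2 * W i 1 ≤ (Nat.fib n : ℤ) - 1 := by omega
      exact_mod_cast this
    have : 2 * (W i 2 : ℝ) < Nat.fib (n + 1) := by
      rw [hd]
      nlinarith
    exact_mod_cast this
  · intro h
    by_contra hc
    push Not at hc
    have hn2 : 2 ≤ n := by
      by_contra hc
      have : n = 1 := by omega
      subst this
      norm_num at h
      omega
    have hp := psi_pow n 2 hn2
    rw [psi_abs] at hp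
    have hq : (phi - 1) ^ 2 ≤ 0.4 := by
      have : (phi - 1) ^ 2 ≤ (0.6181 : ℝ) ^ 2 := by gcongr <;> linarith
      norm_num at this ⊢; linarith
    have hr := (abs_le.mp (hp.trans hq)).2
    have hc' : (Nat.fib n : ℝ) ≤ 2 * (W i 1 : ℝ) := by exact_mod_cast hc
    have h' : 2 * (W i 2 : ℝ) < Nat.fib (n + 1) := by exact_mod_cast h
    rw [hd] at h'
    nlinarith

lemma W_rec (i k : ℕ) : W i (k + 3) = W i (k + 2) + W i (k + 1) := rfl

lemma sign (i : ℕ) (hi : 0 < i) (d k : ℕ) :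
    (2 * W i (k + 1) < (Nat.fib (d + k + 1) : ℤ) ↔ 2 * W i 1 < (Nat.fib (d + 1) : ℤ)) ∧
    (2 * W i (k + 2) < (Nat.fib (d + k + 2) : ℤ) ↔ 2 * W i 1 < (Nat.fib (d + 1) : ℤ)) := by
  induction k with
  | zero => exact ⟨Iff.rfl, (key i hi (d + 1) (by omega)).symm⟩
  | succ k ih =>
    obtain ⟨a, b⟩ := ih
    refine ⟨b, ?_⟩
    have hf : (Nat.fib (d + (k + 1) + 2) : ℤ) = Nat.fib (d + k + 1) + Nat.fib (d + k + 2) := by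
      rw [show d + (k + 1) + 2 = (d + k + 1) + 2 by ring, Nat.fib_add_two]
      push_cast; rfl
    rw [show k + 1 + 2 = k + 3 from rfl, W_rec, hf]
    by_cases h : 2 * W i 1 < (Nat.fib (d + 1) : ℤ)
    · have := a.2 h
      have := b.2 h
      exact ⟨fun _ => h, fun _ => by omega⟩
    · have := mt a.1 h
      have := mt b.1 h
      exact ⟨fun _ => by omega, fun x => absurd x h⟩

/-- For every `i` there is a positive integer `μ_i` with
`W_{i,k} < F_n/2 ↔ n − k > μ_i` for all positive `n, k`. -/
theorem exists_mu (i : ℕ) (hi : 0 < i) :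
    ∃ μ : ℕ, 0 < μ ∧ ∀ n k : ℕ, 0 < n → 0 < k →
      (2 * W i k < (Nat.fib n : ℤ) ↔ (μ : ℤ) < (n : ℤ) - (k : ℤ)) := by
  classical
  obtain ⟨p1, p2⟩ := W_one_pos i hi
  have hex : ∃ d : ℕ, 2 * W i 1 < (Nat.fib (d + 1) : ℤ) := by
    refine ⟨(2 * W i 1).toNat + 2, ?_⟩
    have := Nat.le_fib_add_one ((2 * W i 1).toNat + 2 + 1)
    omega
  have hspec := Nat.find_spec hex
  have hmin := fun m => Nat.find_min' hex (m := m)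
  generalize Nat.find hex = D at *
  have hD : 2 ≤ D := by
    by_contra hc
    have : Nat.fib (D + 1) ≤ Nat.fib 2 := Nat.fib_mono (by omega)
    norm_num at this
    omega
  refine ⟨D - 1, by omega, ?_⟩
  intro n k hn hk
  obtain ⟨k, rfl⟩ : ∃ j, k = j + 1 := ⟨k - 1, by omega⟩
  by_cases hnk : k + 1 ≤ n
  · obtain ⟨d, rfl⟩ : ∃ d, n = d + k + 1 := ⟨n - (k + 1), by omega⟩
    rw [(sign i hi d k).1]
    constructor
    · intro h
      have := hmin d h
      push_cast
      omega
    · intro h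
      push_cast at h
      have : Nat.fib (D + 1) ≤ Nat.fib (d + 1) := Nat.fib_mono (by omega)
      omega
  · constructor
    · intro h
      exfalso
      have h0 : Nat.fib n ≤ Nat.fib (0 + k + 1) := Nat.fib_mono (by omega)
      have := (sign i hi 0 k).1.1 (by omega)
      norm_num at this
      omega
    · intro h
      omega
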